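/- There exists an absolute constant c > 0 such that for every alphabet Σ of size σ ≥ 2 and every n ∈ ℕ, if S ∈ Σⁿ is chosen uniformly at random, then E[n − L(S)] ≤ c/σ. Equivalently, E[L(S)] = n − O(σ^{-1}). -/

import Mathlib

/-! Write `x = 1/σ`. A factor `T` of the random word has a given proper border length `ℓ` with
probability `x ^ ℓ`, since a border of length `ℓ` forces the last `ℓ` letters of `T` one by one.

Fix `m` and look at the factors `T_i = S[im, n - im)` for `i < r`, where `r = max m 1`. If
`n - L(S) > 2m²`, every `T_i` has a proper border. Either some `T_i` has a border longer than `m`,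
which has probability at most `2 r x ^ (m + 1)` (`sum_card_border_long_le`); or every `T_i` has a
border of length at most `m`. The latter event for `T_i` involves only the `i`-th block of length
`m` from the left and the `i`-th one from the right, and these pairs of blocks are disjoint for
different `i`, so these events are independent. Each has probability at most `x + x² ≤ 3/4`: the
length-one border has probability `x`, and a border of length `ℓ ≥ 2` together with distinct first
and last letters has probability `(1 - x) x ^ ℓ` (`card_short_le`).

Hence `P(n - L(S) > 2m²) ≤ (2/σ) ((3/4) ^ m + (m + 1) 2 ^ (-m))` (`card_deficit_le`), and
`E[n - L(S)] ≤ ∑ₘ (4m + 2) P(n - L(S) > 2m²)` is at most a convergent series divided by `σ`. -/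


open Finset

/-- `S` has a border of length `ℓ`: `1 ≤ ℓ ≤ |S|` and the length-`ℓ` prefix of `S`
equals its length-`ℓ` suffix. -/
def HasBorder {α : Type*} (S : List α) (ℓ : ℕ) : Prop :=
  1 ≤ ℓ ∧ ℓ ≤ S.length ∧ S.take ℓ = S.drop (S.length - ℓ)

/-- A string is unbordered if it has no proper border (no border of length `< |S|`). -/
def Unbordered {α : Type*} (S : List α) : Prop :=
  ∀ ℓ, ℓ < S.length → ¬ HasBorder S ℓ

/-- `maxUnb S` is `L(S)`: the maximum length of (nonempty) unbordered factors of `S`. -/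
noncomputable def maxUnb {α : Type*} (S : List α) : ℕ :=
  sSup {k | ∃ T, T ≠ [] ∧ T <:+: S ∧ Unbordered T ∧ T.length = k}

/-- `p > 0` is a period of `T` if `T[i] = T[i+p]` whenever both indices are valid. -/
def IsPeriod {α : Type*} (T : List α) (p : ℕ) : Prop :=
  0 < p ∧ ∀ (i : ℕ) (h : i + p < T.length),
    T[i]'(Nat.lt_of_le_of_lt (Nat.le_add_right i p) h) = T[i + p]'h

/-- `per T` is the shortest period of `T`. -/
noncomputable def per {α : Type*} (T : List α) : ℕ := sInf {p | IsPeriod T p}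

/-- `borderF S` is `F(S)`: the length of the shortest border of `S`. -/
noncomputable def borderF {α : Type*} (S : List α) : ℕ := sInf {ℓ | HasBorder S ℓ}

/-- `substr S i j` is the factor `S[i,j]` in 1-based closed-interval indexing. -/
def substr {α : Type*} (S : List α) (i j : ℕ) : List α := (S.drop (i - 1)).take (j + 1 - i)

/-- The factor `S[i, n - i)` (0-based, half-open) has a border of length `ℓ`: the letters in
`[i, i + ℓ)` agree with those in `[n - i - ℓ, n - i)`. Meaningful when `2 * i + ℓ ≤ n`. -/
def CentralBorder {Γ : Type} {n : ℕ} (S : Fin n → Γ) (i ℓ : ℕ) : Prop :=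
  ∀ a b : Fin n, i ≤ a.val → a.val < i + ℓ → b.val = a.val + (n - 2 * i - ℓ) → S a = S b

/-- The factor `S[i, n - i)` has a border of length between `1` and `m`. -/
def ShortBorder {Γ : Type} {n : ℕ} (S : Fin n → Γ) (i m : ℕ) : Prop :=
  ∃ ℓ, 1 ≤ ℓ ∧ ℓ ≤ m ∧ CentralBorder S i ℓ

/-! ### Counting words with forced letters -/

/-- If within `A` the letter at each position of `D` is a function of the earlier letters, then
`A` has at most `σ ^ (n - |D|)` members. -/
lemma card_mul_pow_le {Γ : Type} [Fintype Γ] {n : ℕ} (A : Finset (Fin n → Γ)) (D : Finset ℕ)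
    (hD : ∀ p ∈ D, p < n)
    (h : ∀ S ∈ A, ∀ S' ∈ A, ∀ p : Fin n, p.val ∈ D → (∀ q < p, S q = S' q) → S p = S' p) :
    A.card * Fintype.card Γ ^ D.card ≤ Fintype.card Γ ^ n := by
  classical
  have h1 : A.card ≤ Fintype.card ({p : Fin n // p.val ∉ D} → Γ) := by
    rw [← Finset.card_univ]
    refine Finset.card_le_card_of_injOn (fun S p => S p.1) (fun _ _ => by simp) ?_
    intro S hS S' hS' heq
    funext p
    induction p using WellFoundedLT.induction with
    | ind p ih =>
      by_cases hp : p.val ∈ D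
      · exact h S hS S' hS' p hp ih
      · exact congrFun heq ⟨p, hp⟩
  have h2 : Fintype.card {p : Fin n // p.val ∉ D} + D.card = n := by
    have h3 : Fintype.card {p : Fin n // p.val ∈ D} = D.card := by
      rw [Fintype.card_subtype]
      rw [← Finset.card_image_of_injective _ Fin.val_injective]
      congr 1
      ext k
      simp only [Finset.mem_image, Finset.mem_filter, Finset.mem_univ, true_and]
      constructor
      · rintro ⟨a, ha, rfl⟩; exact ha
      · intro hk; exact ⟨⟨k, hD k hk⟩, hk, rfl⟩
    have h4 := Fintype.card_subtype_compl (fun p : Fin n => p.val ∈ D)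
    have h5 := Fintype.card_subtype_le (fun p : Fin n => p.val ∈ D)
    rw [Fintype.card_fin] at h4 h5
    omega
  rw [Fintype.card_fun] at h1
  calc _ ≤ Fintype.card Γ ^ Fintype.card {p : Fin n // p.val ∉ D} * Fintype.card Γ ^ D.card :=
        Nat.mul_le_mul_right _ h1
    _ = _ := by rw [← pow_add, h2]

/-- Real-valued form of `card_mul_pow_le`. -/
lemma card_le_mul_inv_pow {Γ : Type} [Fintype Γ] {n : ℕ} (hσ : 0 < Fintype.card Γ)
    (A : Finset (Fin n → Γ)) (D : Finset ℕ) (hD : ∀ p ∈ D, p < n)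
    (h : ∀ S ∈ A, ∀ S' ∈ A, ∀ p : Fin n, p.val ∈ D → (∀ q < p, S q = S' q) → S p = S' p) :
    (A.card : ℝ) ≤ (Fintype.card Γ : ℝ) ^ n * (1 / (Fintype.card Γ : ℝ)) ^ D.card := by
  have h1 := card_mul_pow_le A D hD h
  have h2 : (A.card : ℝ) * (Fintype.card Γ : ℝ) ^ D.card ≤ (Fintype.card Γ : ℝ) ^ n := by
    exact_mod_cast h1
  have h3 : (0 : ℝ) < Fintype.card Γ := by exact_mod_cast hσ
  rw [one_div, inv_pow, ← div_eq_mul_inv, le_div_iff₀ (by positivity)]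
  exact h2

open Classical in
lemma card_border_le {Γ : Type} [Fintype Γ] {n : ℕ} (hσ : 0 < Fintype.card Γ) (i ℓ : ℕ)
    (hl : 2 * i + ℓ < n) :
    ((univ.filter fun S : Fin n → Γ => CentralBorder S i ℓ).card : ℝ) ≤
      (Fintype.card Γ : ℝ) ^ n * (1 / (Fintype.card Γ : ℝ)) ^ ℓ := by
  have := card_le_mul_inv_pow hσ (univ.filter fun S : Fin n → Γ => CentralBorder S i ℓ)
    (Finset.Ico (n - i - ℓ) (n - i)) (by intro p hp; simp at hp; omega) ?_
  · rw [Nat.card_Ico] at this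
    convert this using 3
    omega
  · intro S hS S' hS' p hp hq
    simp only [Finset.mem_filter, Finset.mem_univ, true_and] at hS hS'
    rw [Finset.mem_Ico] at hp
    have hlt : p.val - (n - 2 * i - ℓ) < n := by omega
    rw [← hS ⟨_, hlt⟩ p (by simp; omega) (by simp; omega) (by simp; omega),
      ← hS' ⟨_, hlt⟩ p (by simp; omega) (by simp; omega) (by simp; omega)]
    exact hq _ (by rw [Fin.lt_def]; simp; omega)

/-! ### Short borders -/

open Classical in
/-- Besides the `ℓ` letters of the right copy of the border, the two outer letters are
prescribed, and by the border condition so is the last letter of the left copy. -/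
lemma card_border_ends_le {Γ : Type} [Fintype Γ] (hσ : 0 < Fintype.card Γ) (m ℓ : ℕ)
    (hl : 2 ≤ ℓ) (hm : ℓ ≤ m) (u v : Fin (2 * m)) (hu : u.val = 0) (hv : v.val = 2 * m - 1)
    (a b : Γ) :
    ((univ.filter fun S : Fin (2 * m) → Γ => CentralBorder S 0 ℓ ∧ S u = a ∧ S v = b).card : ℝ) ≤
      (Fintype.card Γ : ℝ) ^ (2 * m) * (1 / (Fintype.card Γ : ℝ)) ^ (ℓ + 2) := by
  have := card_le_mul_inv_pow hσ
    (univ.filter fun S : Fin (2 * m) → Γ => CentralBorder S 0 ℓ ∧ S u = a ∧ S v = b)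
    (insert 0 (insert (ℓ - 1) (Finset.Ico (2 * m - ℓ) (2 * m))))
    (by intro p hp; simp at hp; omega) ?_
  · rw [Finset.card_insert_of_notMem (by simp; omega),
      Finset.card_insert_of_notMem (by simp; omega), Nat.card_Ico] at this
    convert this using 3
    omega
  · intro S hS S' hS' p hp hq
    simp only [Finset.mem_filter, Finset.mem_univ, true_and] at hS hS'
    obtain ⟨hS, hSu, hSv⟩ := hS
    obtain ⟨hS', hSu', hSv'⟩ := hS'
    simp only [Finset.mem_insert, Finset.mem_Ico] at hp
    rcases hp with hp | hp | hp
    · have : p = u := Fin.ext (by omega)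
      rw [this, hSu, hSu']
    · rw [hS p v (by omega) (by omega) (by omega), hS' p v (by omega) (by omega) (by omega),
        hSv, hSv']
    · have hlt : p.val - (2 * m - ℓ) < 2 * m := by omega
      rw [← hS ⟨_, hlt⟩ p (by simp) (by simp; omega) (by simp; omega),
        ← hS' ⟨_, hlt⟩ p (by simp) (by simp; omega) (by simp; omega)]
      exact hq _ (by rw [Fin.lt_def]; simp; omega)

open Classical in
lemma card_border_ne_ends_le {Γ : Type} [Fintype Γ] (hσ : 0 < Fintype.card Γ) (m ℓ : ℕ)
    (hl : 2 ≤ ℓ) (hm : ℓ ≤ m) (u v : Fin (2 * m)) (hu : u.val = 0) (hv : v.val = 2 * m - 1) :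
    ((univ.filter fun S : Fin (2 * m) → Γ => CentralBorder S 0 ℓ ∧ S u ≠ S v).card : ℝ) ≤
      (Fintype.card Γ : ℝ) ^ (2 * m) *
        ((1 - 1 / (Fintype.card Γ : ℝ)) * (1 / (Fintype.card Γ : ℝ)) ^ ℓ) := by
  have hsub : (univ.filter fun S : Fin (2 * m) → Γ => CentralBorder S 0 ℓ ∧ S u ≠ S v) ⊆
      (univ : Finset Γ).offDiag.biUnion fun ab =>
        univ.filter fun S : Fin (2 * m) → Γ => CentralBorder S 0 ℓ ∧ S u = ab.1 ∧ S v = ab.2 := by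
    intro S hS
    simp only [Finset.mem_filter, Finset.mem_univ, true_and] at hS
    simp only [Finset.mem_biUnion, Finset.mem_filter, Finset.mem_univ, true_and,
      Finset.mem_offDiag]
    exact ⟨(S u, S v), hS.2, hS.1, rfl, rfl⟩
  have h1 := (Finset.card_le_card hsub).trans Finset.card_biUnion_le
  have h2 : ((univ.filter fun S : Fin (2 * m) → Γ => CentralBorder S 0 ℓ ∧ S u ≠ S v).card : ℝ) ≤
      ∑ ab ∈ (univ : Finset Γ).offDiag, ((univ.filter fun S : Fin (2 * m) → Γ =>
        CentralBorder S 0 ℓ ∧ S u = ab.1 ∧ S v = ab.2).card : ℝ) := by exact_mod_cast h1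
  refine h2.trans ((Finset.sum_le_sum fun ab _ =>
    card_border_ends_le hσ m ℓ hl hm u v hu hv ab.1 ab.2).trans ?_)
  rw [Finset.sum_const, Finset.offDiag_card, Finset.card_univ, nsmul_eq_mul,
    Nat.cast_sub (Nat.le_mul_self _)]
  have h3 : (Fintype.card Γ : ℝ) ≠ 0 := by exact_mod_cast hσ.ne'
  apply le_of_eq
  push_cast
  rw [pow_add]
  field_simp

open Classical in
lemma card_short_le {Γ : Type} [Fintype Γ] (hσ : 0 < Fintype.card Γ) (m : ℕ) :
    ((univ.filter fun S : Fin (2 * m) → Γ => ShortBorder S 0 m).card : ℝ) ≤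
      (Fintype.card Γ : ℝ) ^ (2 * m) *
        (1 / (Fintype.card Γ : ℝ) + (1 / (Fintype.card Γ : ℝ)) ^ 2) := by
  rcases Nat.eq_zero_or_pos m with rfl | hm
  · have : (univ.filter fun S : Fin (2 * 0) → Γ => ShortBorder S 0 0) = ∅ := by
      apply Finset.filter_eq_empty_iff.2
      rintro S - ⟨ℓ, h1, h2, -⟩
      omega
    rw [this]
    simp
    positivity
  set x : ℝ := 1 / (Fintype.card Γ : ℝ) with hx
  have hx0 : 0 ≤ x := by positivity
  let u : Fin (2 * m) := ⟨0, by omega⟩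
  let v : Fin (2 * m) := ⟨2 * m - 1, by omega⟩
  have hsub : (univ.filter fun S : Fin (2 * m) → Γ => ShortBorder S 0 m) ⊆
      (univ.filter fun S : Fin (2 * m) → Γ => CentralBorder S 0 1) ∪
      (Finset.Ico 2 (m + 1)).biUnion fun ℓ =>
        univ.filter fun S : Fin (2 * m) → Γ => CentralBorder S 0 ℓ ∧ S u ≠ S v := by
    intro S hS
    simp only [Finset.mem_filter, Finset.mem_univ, true_and] at hS
    obtain ⟨ℓ, h1, h2, h3⟩ := hS
    simp only [Finset.mem_union, Finset.mem_biUnion, Finset.mem_filter, Finset.mem_univ, true_and,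
      Finset.mem_Ico]
    by_cases huv : S u = S v
    · left
      intro a b h0 ha hb
      have e1 : a = u := Fin.ext (by simp [u]; omega)
      have e2 : b = v := Fin.ext (by simp [v]; omega)
      rw [e1, e2, huv]
    · right
      refine ⟨ℓ, ⟨?_, by omega⟩, h3, huv⟩
      by_contra hlt
      have e1 : ℓ = 1 := by omega
      subst e1
      exact huv (h3 u v (by simp) (by simp [u]) (by simp [u, v]))
  have h1 := ((Finset.card_le_card hsub).trans (Finset.card_union_le _ _)).trans
    (Nat.add_le_add_left Finset.card_biUnion_le _)
  have h2 : ((univ.filter fun S : Fin (2 * m) → Γ => ShortBorder S 0 m).card : ℝ) ≤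
      ((univ.filter fun S : Fin (2 * m) → Γ => CentralBorder S 0 1).card : ℝ) +
      ∑ ℓ ∈ Finset.Ico 2 (m + 1), ((univ.filter fun S : Fin (2 * m) → Γ =>
        CentralBorder S 0 ℓ ∧ S u ≠ S v).card : ℝ) := by exact_mod_cast h1
  refine h2.trans ((add_le_add (card_border_le hσ 0 1 (by omega))
    (Finset.sum_le_sum fun ℓ hℓ => card_border_ne_ends_le hσ m ℓ (Finset.mem_Ico.1 hℓ).1
      (by have := (Finset.mem_Ico.1 hℓ).2; omega) u v rfl rfl)).trans ?_)
  rw [← Finset.mul_sum, ← Finset.mul_sum, ← mul_add, ← hx, pow_one]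
  have hg := geom_sum_Ico_mul_neg x (show 2 ≤ m + 1 by omega)
  have : (1 - x) * ∑ ℓ ∈ Finset.Ico 2 (m + 1), x ^ ℓ ≤ x ^ 2 := by
    rw [mul_comm, hg]
    have := pow_nonneg hx0 (m + 1)
    linarith
  gcongr

open Classical in
/-- Independence of the short-border events, in the form of peeling off the two outer blocks of
length `m`: they carry the event for `i = 0`, and what is left carries all the others. -/
lemma card_allShort_le {Γ : Type} [Fintype Γ] (m r : ℕ) : ∀ n : ℕ, 2 * m * r ≤ n →
    (univ.filter fun S : Fin n → Γ => ∀ i < r, ShortBorder S (i * m) m).card ≤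
      (univ.filter fun S : Fin (2 * m) → Γ => ShortBorder S 0 m).card ^ r *
        Fintype.card Γ ^ (n - 2 * m * r) := by
  induction r with
  | zero => intro n _; simp
  | succ r ih =>
    intro n hn
    have hmr : 2 * m * (r + 1) = 2 * m * r + 2 * m := by ring
    obtain ⟨k, rfl⟩ : ∃ k, n = k + 2 * m := ⟨n - 2 * m, by omega⟩
    have hk := ih k (by omega)
    let outer : (Fin (k + 2 * m) → Γ) → (Fin (2 * m) → Γ) := fun S j =>
      if j.val < m then S ⟨j.val, by omega⟩ else S ⟨k + j.val, by omega⟩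
    let inner : (Fin (k + 2 * m) → Γ) → (Fin k → Γ) := fun S j => S ⟨m + j.val, by omega⟩
    have hcard : (univ.filter fun S : Fin (k + 2 * m) → Γ =>
          ∀ i < r + 1, ShortBorder S (i * m) m).card ≤
        ((univ.filter fun S : Fin (2 * m) → Γ => ShortBorder S 0 m) ×ˢ
          (univ.filter fun S : Fin k → Γ => ∀ i < r, ShortBorder S (i * m) m)).card := by
      refine Finset.card_le_card_of_injOn (fun S => (outer S, inner S)) ?_ ?_
      · intro S hS
        simp only [Finset.coe_filter, Finset.mem_univ, true_and, Set.mem_ofPred_eq] at hS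
        simp only [Finset.coe_product, Finset.coe_filter, Finset.mem_univ, true_and, Set.mem_prod,
          Set.mem_ofPred_eq]
        constructor
        · obtain ⟨ℓ, h1, h2, h3⟩ := hS 0 (by omega)
          rw [zero_mul] at h3
          refine ⟨ℓ, h1, h2, fun a b _ ha hb => ?_⟩
          simp only [outer]
          rw [if_pos (by omega), if_neg (by omega)]
          exact h3 _ _ (by simp) (by simpa using ha) (by simp; omega)
        · intro i hi
          obtain ⟨ℓ, h1, h2, h3⟩ := hS (i + 1) (by omega)
          refine ⟨ℓ, h1, h2, fun a b h0 ha hb => ?_⟩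
          rw [add_mul, one_mul] at h3
          exact h3 _ _ (by simp; omega) (by simp; omega) (by simp; omega)
      · intro S _ S' _ heq
        simp only [Prod.mk.injEq] at heq
        obtain ⟨ho, hi⟩ := heq
        funext p
        by_cases h1 : p.val < m
        · have := congrFun ho ⟨p.val, by omega⟩
          simpa [outer, h1] using this
        by_cases h2 : p.val < k + m
        · have := congrFun hi ⟨p.val - m, by omega⟩
          have e : m + (p.val - m) = p.val := by omega
          simpa [inner, e] using this
        · have := congrFun ho ⟨p.val - k, by omega⟩
          have e : k + (p.val - k) = p.val := by omega
          have e2 : ¬ p.val - k < m := by omega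
          simpa [outer, e, e2] using this
    rw [Finset.card_product] at hcard
    refine hcard.trans ((Nat.mul_le_mul_left _ hk).trans (le_of_eq ?_))
    have e : k + 2 * m - 2 * m * (r + 1) = k - 2 * m * r := by omega
    rw [e]
    ring

/-! ### From long unbordered factors to borders -/

lemma length_le_maxUnb {α : Type*} {S T : List α} (h0 : T ≠ []) (h : T <:+: S)
    (hT : Unbordered T) : T.length ≤ maxUnb S := by
  refine le_csSup ⟨S.length, ?_⟩ ⟨T, h0, h, hT, rfl⟩
  rintro k ⟨U, -, hU, -, rfl⟩
  exact hU.length_le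

/-- If `L(S) < |S[i, n - i)|`, that factor has a proper border. -/
lemma exists_centralBorder {Γ : Type} {n : ℕ} (S : Fin n → Γ) (i : ℕ)
    (h : maxUnb (List.ofFn S) + 2 * i < n) :
    ∃ ℓ, 1 ≤ ℓ ∧ 2 * i + ℓ < n ∧ CentralBorder S i ℓ := by
  set T := ((List.ofFn S).drop i).take (n - 2 * i) with hT
  have hlen : T.length = n - 2 * i := by simp [hT]; omega
  have hnb : ¬ Unbordered T := by
    intro hu
    have h0 : T ≠ [] := by
      rw [← List.length_pos_iff]; omega
    have := length_le_maxUnb h0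
      ((List.take_prefix _ _).isInfix.trans (List.drop_suffix _ _).isInfix) hu
    omega
  unfold Unbordered HasBorder at hnb
  push Not at hnb
  obtain ⟨ℓ, h1, h2, h3, h4⟩ := hnb
  refine ⟨ℓ, h2, by omega, fun a b ha hal hb => ?_⟩
  have h5 := congrArg (fun l : List Γ => l[a.val - i]?) h4
  have e1 : i + (a.val - i) = a.val := by omega
  have e2 : i + (n - 2 * i - ℓ + (a.val - i)) = b.val := by omega
  have c1 : a.val - i < ℓ := by omega
  have c2 : a.val - i < n - 2 * i := by omega
  have c3 : n - 2 * i - ℓ + (a.val - i) < n - 2 * i := by omega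
  simp only [List.getElem?_drop, List.getElem?_take, hlen, c1, if_true] at h5
  simpa [hT, List.getElem?_take, List.getElem?_drop, c2, c3, e1, e2, List.getElem?_ofFn] using h5

/-! ### Tail bound for `n - L(S)` -/

open Classical in
lemma sum_card_border_long_le {Γ : Type} [Fintype Γ] (hσ : 2 ≤ Fintype.card Γ) (n m r : ℕ) :
    ((univ.filter fun S : Fin n → Γ => ∃ i < r, ∃ ℓ, m < ℓ ∧ 2 * (i * m) + ℓ < n ∧
        CentralBorder S (i * m) ℓ).card : ℝ) ≤
      (Fintype.card Γ : ℝ) ^ n * (r * (2 * (1 / (Fintype.card Γ : ℝ)) ^ (m + 1))) := by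
  set x : ℝ := 1 / (Fintype.card Γ : ℝ) with hx
  have hx0 : 0 ≤ x := by positivity
  have hx2 : x ≤ 1 / 2 := by
    rw [hx]
    have : (2 : ℝ) ≤ Fintype.card Γ := by exact_mod_cast hσ
    gcongr
  have hsub : (univ.filter fun S : Fin n → Γ => ∃ i < r, ∃ ℓ, m < ℓ ∧ 2 * (i * m) + ℓ < n ∧
        CentralBorder S (i * m) ℓ) ⊆
      (Finset.range r).biUnion fun i => (Finset.Ico (m + 1) n).biUnion fun ℓ =>
        univ.filter fun S : Fin n → Γ => 2 * (i * m) + ℓ < n ∧ CentralBorder S (i * m) ℓ := by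
    intro S hS
    simp only [Finset.mem_filter, Finset.mem_univ, true_and] at hS
    obtain ⟨i, hi, ℓ, h1, h2, h3⟩ := hS
    simp only [Finset.mem_biUnion, Finset.mem_filter, Finset.mem_univ, true_and,
      Finset.mem_Ico, Finset.mem_range]
    exact ⟨i, hi, ℓ, ⟨by omega, by omega⟩, h2, h3⟩
  have h1 := ((Finset.card_le_card hsub).trans Finset.card_biUnion_le).trans
    (Finset.sum_le_sum fun i _ => Finset.card_biUnion_le)
  have h2 : ((univ.filter fun S : Fin n → Γ => ∃ i < r, ∃ ℓ, m < ℓ ∧ 2 * (i * m) + ℓ < n ∧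
        CentralBorder S (i * m) ℓ).card : ℝ) ≤
      ∑ i ∈ Finset.range r, ∑ ℓ ∈ Finset.Ico (m + 1) n, ((univ.filter fun S : Fin n → Γ =>
        2 * (i * m) + ℓ < n ∧ CentralBorder S (i * m) ℓ).card : ℝ) := by exact_mod_cast h1
  have h3 : ∀ i ℓ : ℕ, ((univ.filter fun S : Fin n → Γ =>
        2 * (i * m) + ℓ < n ∧ CentralBorder S (i * m) ℓ).card : ℝ) ≤
      (Fintype.card Γ : ℝ) ^ n * x ^ ℓ := by
    intro i ℓ
    by_cases hl : 2 * (i * m) + ℓ < n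
    · simp only [hl, true_and]
      exact card_border_le (by omega) _ _ hl
    · simp only [hl, false_and, Finset.filter_false, Finset.card_empty, Nat.cast_zero]
      positivity
  refine h2.trans ((Finset.sum_le_sum fun i _ => Finset.sum_le_sum fun ℓ _ => h3 i ℓ).trans ?_)
  rw [Finset.sum_const, Finset.card_range, nsmul_eq_mul, ← Finset.mul_sum, mul_left_comm]
  have hg : ∑ ℓ ∈ Finset.Ico (m + 1) n, x ^ ℓ ≤ x ^ (m + 1) / (1 - x) :=
    geom_sum_Ico_le_of_lt_one hx0 (by linarith)
  have hg2 : x ^ (m + 1) / (1 - x) ≤ 2 * x ^ (m + 1) := by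
    rw [div_le_iff₀ (by linarith)]
    have := pow_nonneg hx0 (m + 1)
    nlinarith
  have := hg.trans hg2
  gcongr

/-- The weights of the tail bound: `P(n - L(S) > 2m²) ≤ tailWeight m / σ`. -/
noncomputable def tailWeight (m : ℕ) : ℝ := 2 * (3 / 4) ^ m + 2 * (m + 1) * (1 / 2) ^ m

open Classical in
lemma card_deficit_le {Γ : Type} [Fintype Γ] (hσ : 2 ≤ Fintype.card Γ) (n m : ℕ) :
    ((univ.filter fun S : Fin n → Γ => 2 * m ^ 2 < n - maxUnb (List.ofFn S)).card : ℝ) ≤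
      (Fintype.card Γ : ℝ) ^ n * (tailWeight m / (Fintype.card Γ : ℝ)) := by
  by_cases hn : n < 2 * m ^ 2
  · have : (univ.filter fun S : Fin n → Γ => 2 * m ^ 2 < n - maxUnb (List.ofFn S)) = ∅ := by
      apply Finset.filter_eq_empty_iff.2
      intro S _
      omega
    rw [this]
    simp only [Finset.card_empty, Nat.cast_zero]
    unfold tailWeight
    positivity
  push Not at hn
  have hσR : (2 : ℝ) ≤ Fintype.card Γ := by exact_mod_cast hσ
  set s : ℝ := (Fintype.card Γ : ℝ) with hs
  have hs0 : 0 < s := by linarith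
  -- For `m = 0` the short-border event has to be impossible, not vacuous: hence at least one `i`.
  obtain ⟨r, hr⟩ : ∃ r, r = max m 1 := ⟨_, rfl⟩
  have hr1 : 1 ≤ r := by omega
  have hrm : 2 * m * r = 2 * m ^ 2 := by
    rcases Nat.eq_zero_or_pos m with rfl | hm
    · simp
    · have : r = m := by omega
      rw [this]; ring
  have hsub : (univ.filter fun S : Fin n → Γ => 2 * m ^ 2 < n - maxUnb (List.ofFn S)) ⊆
      (univ.filter fun S : Fin n → Γ => ∀ i < r, ShortBorder S (i * m) m) ∪
      (univ.filter fun S : Fin n → Γ => ∃ i < r, ∃ ℓ, m < ℓ ∧ 2 * (i * m) + ℓ < n ∧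
        CentralBorder S (i * m) ℓ) := by
    intro S hS
    simp only [Finset.mem_filter, Finset.mem_univ, true_and, Finset.mem_union] at hS ⊢
    by_contra hcon
    push Not at hcon
    obtain ⟨⟨i, hi, h1⟩, h2⟩ := hcon
    have him : 2 * (i * m) ≤ 2 * m ^ 2 := by
      rw [← hrm, mul_assoc, mul_comm m r]
      gcongr
    obtain ⟨ℓ, l1, l2, l3⟩ := exists_centralBorder S (i * m) (by omega)
    rcases le_or_gt ℓ m with hl | hl
    · exact h1 ⟨ℓ, l1, hl, l3⟩
    · exact h2 i hi ℓ hl l2 l3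
  have h1 := (Finset.card_le_card hsub).trans (Finset.card_union_le _ _)
  have h2 : ((univ.filter fun S : Fin n → Γ => 2 * m ^ 2 < n - maxUnb (List.ofFn S)).card : ℝ) ≤
      ((univ.filter fun S : Fin n → Γ => ∀ i < r, ShortBorder S (i * m) m).card : ℝ) +
      ((univ.filter fun S : Fin n → Γ => ∃ i < r, ∃ ℓ, m < ℓ ∧ 2 * (i * m) + ℓ < n ∧
        CentralBorder S (i * m) ℓ).card : ℝ) := by exact_mod_cast h1
  have hshort : ((univ.filter fun S : Fin n → Γ => ∀ i < r, ShortBorder S (i * m) m).card : ℝ) ≤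
      s ^ n * (1 / s + (1 / s) ^ 2) ^ r := by
    have hA : ((univ.filter fun S : Fin n → Γ => ∀ i < r, ShortBorder S (i * m) m).card : ℝ) ≤
        ((univ.filter fun S : Fin (2 * m) → Γ => ShortBorder S 0 m).card : ℝ) ^ r *
          s ^ (n - 2 * m * r) := by
      rw [hs]
      exact_mod_cast card_allShort_le (Γ := Γ) m r n (by omega)
    have hB := card_short_le (Γ := Γ) (by omega) m
    rw [← hs] at hB
    refine hA.trans ?_
    calc _ ≤ (s ^ (2 * m) * (1 / s + (1 / s) ^ 2)) ^ r * s ^ (n - 2 * m * r) := by gcongr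
      _ = s ^ (2 * m * r + (n - 2 * m * r)) * (1 / s + (1 / s) ^ 2) ^ r := by
        rw [mul_pow, ← pow_mul, pow_add]; ring
      _ = _ := by rw [Nat.add_sub_cancel' (by omega)]
  have hlong := sum_card_border_long_le (Γ := Γ) hσ n m r
  rw [← hs] at hlong
  refine h2.trans ((add_le_add hshort hlong).trans ?_)
  rw [← mul_add]
  have hx2 : 1 / s ≤ 1 / 2 := by gcongr
  have hx0 : 0 < 1 / s := by positivity
  have b1 : (1 / s + (1 / s) ^ 2) ^ r ≤ 2 * (3 / 4) ^ m * (1 / s) := by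
    obtain ⟨k, rfl⟩ : ∃ k, r = k + 1 := ⟨r - 1, by omega⟩
    have q1 : 1 / s + (1 / s) ^ 2 ≤ 3 / 2 * (1 / s) := by nlinarith
    have q2 : 1 / s + (1 / s) ^ 2 ≤ 3 / 4 := by nlinarith
    have q3 : (3 / 4 : ℝ) ^ (k + 1) ≤ (3 / 4) ^ m :=
      pow_le_pow_of_le_one (by norm_num) (by norm_num) (by omega)
    calc _ = (1 / s + (1 / s) ^ 2) ^ k * (1 / s + (1 / s) ^ 2) := pow_succ _ _
      _ ≤ (3 / 4) ^ k * (3 / 2 * (1 / s)) := by gcongr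
      _ = 2 * (3 / 4) ^ (k + 1) * (1 / s) := by ring
      _ ≤ _ := by gcongr
  have b2 : (r : ℝ) * (2 * (1 / s) ^ (m + 1)) ≤ 2 * (m + 1) * (1 / 2) ^ m * (1 / s) := by
    have q1 : (r : ℝ) ≤ m + 1 := by exact_mod_cast (by omega : r ≤ m + 1)
    calc _ ≤ ((m : ℝ) + 1) * (2 * ((1 / 2) ^ m * (1 / s))) := by
          rw [pow_succ]; gcongr
      _ = _ := by ring
  have hfin : (1 / s + (1 / s) ^ 2) ^ r + (r : ℝ) * (2 * (1 / s) ^ (m + 1)) ≤ tailWeight m / s := by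
    refine (add_le_add b1 b2).trans (le_of_eq ?_)
    unfold tailWeight
    ring
  gcongr

/-! ### Summation -/

/-- Layer-cake inequality along the thresholds `2m²`, whose successive gaps are `4m + 2`. -/
lemma min_le_sum_layers (d N : ℕ) :
    min d (2 * N ^ 2) ≤ ∑ m ∈ Finset.range N, if 2 * m ^ 2 < d then 4 * m + 2 else 0 := by
  induction N with
  | zero => simp
  | succ N ih =>
    rw [Finset.sum_range_succ]
    have : 2 * (N + 1) ^ 2 = 2 * N ^ 2 + (4 * N + 2) := by ring
    split_ifs <;> omega

lemma le_sum_layers {n d : ℕ} (h : d ≤ n) :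
    d ≤ ∑ m ∈ Finset.range n, if 2 * m ^ 2 < d then 4 * m + 2 else 0 := by
  have h1 := min_le_sum_layers d n
  have : n ≤ 2 * n ^ 2 := by nlinarith
  omega

lemma summable_layers : Summable fun m : ℕ => (4 * (m : ℝ) + 2) * tailWeight m := by
  have hp : ∀ (k : ℕ) (r : ℝ), 0 < r → r < 1 → Summable fun m : ℕ => (m : ℝ) ^ k * r ^ m :=
    fun k r h0 h1 => summable_pow_mul_geometric_of_norm_lt_one k (by
      rw [Real.norm_eq_abs, abs_of_pos h0]; exact h1)
  have h1 := (hp 1 (3 / 4) (by norm_num) (by norm_num)).mul_left 8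
  have h2 := (hp 0 (3 / 4) (by norm_num) (by norm_num)).mul_left 4
  have h3 := (hp 2 (1 / 2) (by norm_num) (by norm_num)).mul_left 8
  have h4 := (hp 1 (1 / 2) (by norm_num) (by norm_num)).mul_left 12
  have h5 := (hp 0 (1 / 2) (by norm_num) (by norm_num)).mul_left 4
  refine ((((h1.add h2).add h3).add h4).add h5).congr fun m => ?_
  unfold tailWeight
  ring

/-- there is an absolute constant `c > 0` such that for every alphabet of size
`σ ≥ 2` and every `n`, the expected value of `n - L(S)` for uniformly random `S ∈ Σⁿ` is at most
`c / σ`; i.e. `E[L(S)] = n - O(σ⁻¹)`. -/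
theorem expected_maxUnbordered : ∃ c : ℝ, 0 < c ∧
    ∀ (σ : ℕ), 2 ≤ σ → ∀ (Γ : Type) [Fintype Γ], Fintype.card Γ = σ → ∀ n : ℕ,
      (∑ S : Fin n → Γ, ((n : ℝ) - (maxUnb (List.ofFn S) : ℝ))) / (σ : ℝ) ^ n ≤ c / σ := by
  classical
  have hw : ∀ m : ℕ, 0 < (4 * (m : ℝ) + 2) * tailWeight m := by
    intro m
    unfold tailWeight
    positivity
  refine ⟨∑' m : ℕ, (4 * (m : ℝ) + 2) * tailWeight m,
    summable_layers.tsum_pos (fun m => (hw m).le) 0 (hw 0), ?_⟩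
  intro σ hσ Γ _ hΓ n
  subst hΓ
  have hs0 : (0 : ℝ) < Fintype.card Γ := by exact_mod_cast (by omega : 0 < Fintype.card Γ)
  rw [div_le_iff₀ (by positivity)]
  have hpt : ∀ S : Fin n → Γ, (n : ℝ) - (maxUnb (List.ofFn S) : ℝ) ≤
      ∑ m ∈ Finset.range n,
        if 2 * m ^ 2 < n - maxUnb (List.ofFn S) then (4 * (m : ℝ) + 2) else 0 := by
    intro S
    have h1 : ((n - maxUnb (List.ofFn S) : ℕ) : ℝ) ≤ _ :=
      Nat.cast_le.2 (le_sum_layers (Nat.sub_le n (maxUnb (List.ofFn S))))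
    push_cast at h1
    refine le_trans ?_ h1
    have : n ≤ (n - maxUnb (List.ofFn S)) + maxUnb (List.ofFn S) := by omega
    have h2 : (n : ℝ) ≤ ((n - maxUnb (List.ofFn S) : ℕ) : ℝ) + maxUnb (List.ofFn S) := by
      exact_mod_cast this
    linarith
  calc _ ≤ ∑ S : Fin n → Γ, ∑ m ∈ Finset.range n,
        (if 2 * m ^ 2 < n - maxUnb (List.ofFn S) then (4 * (m : ℝ) + 2) else 0) :=
        Finset.sum_le_sum fun S _ => hpt S
    _ = ∑ m ∈ Finset.range n, (4 * (m : ℝ) + 2) * ((univ.filter fun S : Fin n → Γ =>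
          2 * m ^ 2 < n - maxUnb (List.ofFn S)).card : ℝ) := by
        rw [Finset.sum_comm]
        refine Finset.sum_congr rfl fun m _ => ?_
        rw [← Finset.sum_filter, Finset.sum_const, nsmul_eq_mul, mul_comm]
    _ ≤ ∑ m ∈ Finset.range n, (4 * (m : ℝ) + 2) *
          ((Fintype.card Γ : ℝ) ^ n * (tailWeight m / (Fintype.card Γ : ℝ))) := by
        gcongr with m _
        exact card_deficit_le hσ n m
    _ = (∑ m ∈ Finset.range n, (4 * (m : ℝ) + 2) * tailWeight m) / (Fintype.card Γ : ℝ) *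
          (Fintype.card Γ : ℝ) ^ n := by
        rw [Finset.sum_div, Finset.sum_mul]
        refine Finset.sum_congr rfl fun m _ => ?_
        ring
    _ ≤ _ := by
        gcongr
        exact summable_layers.sum_le_tsum _ fun m _ => (hw m).le
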